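/- Let Γ be a distance-regular graph of diameter D ≥ 2 and valency k, with distinct adjacency eigenvalues k = θ_0 > θ_1 > ⋯ > θ_D. Suppose θ ≠ k is an eigenvalue of the adjacency matrix of Γ of classical q-type for some nonzero real number q. Then θ = θ_1 (the second largest distinct eigenvalue, i.e., the maximum of the adjacency eigenvalues different from k) if and only if q > 0. -/

import Mathlib

/-- `G` is a distance-regular graph of diameter `D` with intersection numbers
`p h i j = p^h_{ij}`: for any two vertices `x, y` at distance `h`, the number of
vertices `z` with `d(x,z) = i` and `d(y,z) = j` equals `p h i j`. -/
structure IsDRG {V : Type*} [Fintype V] (G : SimpleGraph V) (D : ℕ)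
    (p : ℕ → ℕ → ℕ → ℕ) : Prop where
  connected : G.Connected
  dist_le : ∀ x y : V, G.dist x y ≤ D
  exists_dist_eq : ∃ x y : V, G.dist x y = D
  inter : ∀ h i j : ℕ, h ≤ D → i ≤ D → j ≤ D → ∀ x y : V, G.dist x y = h →
    {z : V | G.dist x z = i ∧ G.dist y z = j}.ncard = p h i j

/-- `u` is the standard sequence of `θ` for a distance-regular graph with
intersection numbers `p` (so valency `k = b₀ = p 0 1 1`, `cᵢ = p i 1 (i-1)`,
`aᵢ = p i 1 i`, `bᵢ = p i 1 (i+1)`). -/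
def IsStdSeq (D : ℕ) (p : ℕ → ℕ → ℕ → ℕ) (θ : ℝ) (u : ℕ → ℝ) : Prop :=
  u 0 = 1 ∧ u 1 = θ / (p 0 1 1 : ℝ) ∧
    ∀ i : ℕ, 1 ≤ i → i ≤ D - 1 →
      (p i 1 (i - 1) : ℝ) * u (i - 1) + (p i 1 i : ℝ) * u i
          + (p i 1 (i + 1) : ℝ) * u (i + 1) = θ * u i

/-- The sequence `u` (a standard sequence) is of classical `q`-type:
`u i = (1/q) * u (i-1) + c` for `i = 1, …, D`, for some real `c`. -/
def IsClassicalQType (D : ℕ) (q : ℝ) (u : ℕ → ℝ) : Prop :=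
  ∃ c : ℝ, ∀ i : ℕ, 1 ≤ i → i ≤ D → u i = (1 / q) * u (i - 1) + c

/-- `θ` is an eigenvalue of the adjacency matrix of `G`. -/
def IsAdjEigenval {V : Type*} [Fintype V] (G : SimpleGraph V) [DecidableRel G.Adj]
    (θ : ℝ) : Prop :=
  ∃ v : V → ℝ, v ≠ 0 ∧ (G.adjMatrix ℝ).mulVec v = θ • v

open Finset in
theorem aux_perron (D : ℕ) (a b c S u : ℕ → ℝ) (k η θ : ℝ)
    (hD : 1 ≤ D)
    (hb : ∀ i, 0 ≤ b i) (hc : ∀ i, 0 ≤ c i) (hc0 : c 0 = 0) (hbD : b D = 0)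
    (hsum : ∀ i ≤ D, a i + b i + c i = k)
    (hS1 : S (D+1) = 0)
    (hS0 : η * S 0 = a 0 * S 0 + c 1 * S 1)
    (hS : ∀ i < D, η * S (i+1) = b i * S i + a (i+1) * S (i+1) + c (i+2) * S (i+2))
    (hu : ∀ i ≤ D, c i * u (i-1) + a i * u i + b i * u (i+1) = θ * u i)
    (hd : ∀ i < D, 0 < u i - u (i+1))
    (hη : η ≠ k) (hS00 : S 0 ≠ 0) : η ≤ θ := by
  set F : ℕ → ℝ := fun i => ∑ j ∈ range i, S j with hF
  have F0 : F 0 = 0 := by simp [hF]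
  have Fs : ∀ i, F (i+1) = F i + S i := fun i => by simp [hF, sum_range_succ]
  have key : ∀ i ≤ D, η * F (i+1) = k * F (i+1) - b i * S i + c (i+1) * S (i+1) := by
    intro i
    induction i with
    | zero =>
      intro _
      have := hsum 0 (by omega)
      rw [Fs, F0, zero_add, hS0, ← this, hc0]; ring
    | succ i ih =>
      intro hi
      have h1 := ih (by omega)
      have h2 := hS i (by omega)
      have h3 := hsum (i+1) hi
      rw [Fs (i+1), mul_add, h1, h2, ← h3]; ring
  have FD : F (D+1) = 0 := by
    have := key D le_rfl
    rw [hbD, hS1] at this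
    have h2 : (η - k) * F (D+1) = 0 := by linarith
    rcases mul_eq_zero.1 h2 with h | h
    · exact absurd (by linarith) hη
    · exact h
  set d : ℕ → ℝ := fun i => u i - u (i+1) with hdd
  have k1 : ∀ i < D, (η - k + b i + c (i+1)) * |F (i+1)| ≤ b i * |F i| + c (i+1) * |F (i+2)| := by
    intro i hi
    have e : (η - k + b i + c (i+1)) * F (i+1) = b i * F i + c (i+1) * F (i+2) := by
      have h0 := key i hi.le
      have h := Fs i
      have h' := Fs (i+1)
      linear_combination h0 + b i * h - c (i+1) * h'
    have hbi := hb i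
    have hci := hc (i+1)
    calc (η - k + b i + c (i+1)) * |F (i+1)| ≤ |(η - k + b i + c (i+1)) * F (i+1)| := by
          rw [abs_mul]; exact mul_le_mul_of_nonneg_right (le_abs_self _) (abs_nonneg _)
      _ = |b i * F i + c (i+1) * F (i+2)| := by rw [e]
      _ ≤ |b i * F i| + |c (i+1) * F (i+2)| := abs_add_le _ _
      _ = _ := by rw [abs_mul, abs_mul, abs_of_nonneg hbi, abs_of_nonneg hci]
  have k2 : ∀ i < D, (θ - k + b i + c (i+1)) * d i = c i * d (i-1) + b (i+1) * d (i+1) := by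
    intro i hi
    have h1 := hu i hi.le
    have h2 := hu (i+1) hi
    have h3 := hsum i hi.le
    have h4 := hsum (i+1) hi
    simp only [Nat.add_sub_cancel] at h2
    have ha : a i = k - b i - c i := by linarith
    have ha' : a (i+1) = k - b (i+1) - c (i+1) := by linarith
    rw [ha] at h1
    rw [ha'] at h2
    simp only [hdd]
    rcases i with _ | i
    · rw [hc0] at *
      simp only [zero_add] at *
      linear_combination h2 - h1
    · simp only [Nat.add_sub_cancel] at *
      linear_combination h2 - h1
  have s1 : ∑ i ∈ range D, b i * |F i| * d i = ∑ i ∈ range D, b (i+1) * |F (i+1)| * d (i+1) := by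
    have h1 := sum_range_succ (fun i => b i * |F i| * d i) D
    have h2 := sum_range_succ' (fun i => b i * |F i| * d i) D
    simp only [hbD, F0, abs_zero] at h1 h2
    linarith
  have s2 : ∑ i ∈ range D, c (i+1) * |F (i+2)| * d i = ∑ i ∈ range D, c i * |F (i+1)| * d (i-1) := by
    have h1 := sum_range_succ (fun i => c i * |F (i+1)| * d (i-1)) D
    have h2 := sum_range_succ' (fun i => c i * |F (i+1)| * d (i-1)) D
    simp only [hc0, FD, abs_zero, Nat.add_sub_cancel] at h1 h2
    linarith
  have tot : ∑ i ∈ range D, (η - θ) * (|F (i+1)| * d i) ≤ 0 := by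
    have : ∀ i ∈ range D, (η - θ) * (|F (i+1)| * d i) ≤
        (b i * |F i| * d i + c (i+1) * |F (i+2)| * d i)
          - (c i * |F (i+1)| * d (i-1) + b (i+1) * |F (i+1)| * d (i+1)) := by
      intro i hi
      have hi := mem_range.1 hi
      have h1 := mul_le_mul_of_nonneg_right (k1 i hi) (hd i hi).le
      have h2 := congrArg (fun t => t * |F (i+1)|) (k2 i hi)
      change _ * d i ≤ _ * d i at h1
      linarith
    refine (sum_le_sum this).trans ?_
    rw [sum_sub_distrib, sum_add_distrib, sum_add_distrib, s1, s2]
    linarith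
  rw [← mul_sum] at tot
  have pos : 0 < ∑ i ∈ range D, |F (i+1)| * d i := by
    apply sum_pos'
    · intro i hi
      exact mul_nonneg (abs_nonneg _) (hd i (mem_range.1 hi)).le
    · refine ⟨0, mem_range.2 (by omega), mul_pos ?_ (hd 0 (by omega))⟩
      rw [Fs, F0, zero_add]; exact abs_pos.2 hS00
  by_contra h
  push Not at h
  have := mul_pos (sub_pos.2 h) pos
  linarith

theorem aux_trace {V : Type*} [Fintype V] [DecidableEq V] (A : Matrix V V ℝ) (hA : A.IsHermitian) :
    (A * A).trace = ∑ i, hA.eigenvalues i ^ 2 := by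
  have h := hA.conjStarAlgAut_star_eigenvectorUnitary
  have h2 := congrArg Matrix.trace (congrArg₂ (· * ·) h h)
  rw [← map_mul, Unitary.conjStarAlgAut_star_apply, Matrix.trace_mul_cycle] at h2
  simp [Matrix.diagonal_mul_diagonal, Matrix.trace_diagonal] at h2
  simpa [sq] using h2

theorem aux_neg {V : Type*} [Fintype V] [Nonempty V] (G : SimpleGraph V) [DecidableRel G.Adj]
    (k : ℕ) (hk : 0 < k) (hreg : ∀ x, G.degree x = k) (θ : ℝ) (hθ : θ < -1)
    (h : ∀ η : ℝ, IsAdjEigenval G η → η ≠ (k : ℝ) → η ≤ θ) : False := by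
  classical
  have hA : (G.adjMatrix ℝ).IsHermitian := by
    rw [Matrix.IsHermitian, Matrix.conjTranspose_eq_transpose_of_trivial]
    exact G.transpose_adjMatrix
  have t2 := aux_trace _ hA
  have t1 := hA.trace_eq_sum_eigenvalues
  rw [SimpleGraph.trace_adjMatrix] at t1
  have t3 : (G.adjMatrix ℝ * G.adjMatrix ℝ).trace = Fintype.card V * k := by
    have : ∀ i, (G.adjMatrix ℝ * G.adjMatrix ℝ).diag i = k := by
      intro i
      rw [Matrix.diag_apply, SimpleGraph.adjMatrix_mul_self_apply_self, hreg]
    simp only [Matrix.trace, this]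
    simp
  have hk' : (0:ℝ) < k := by exact_mod_cast hk
  have hle : ∀ i, (k - hA.eigenvalues i) * (hA.eigenvalues i - θ) ≤ 0 := by
    intro i
    by_cases e : hA.eigenvalues i = k
    · simp [e]
    · have : hA.eigenvalues i ≤ θ := by
        refine h _ ⟨_, ?_, hA.mulVec_eigenvectorBasis i⟩ e
        intro h0
        have := hA.eigenvectorBasis.orthonormal.ne_zero i
        apply this
        ext j
        exact congrFun h0 j
      apply mul_nonpos_of_nonneg_of_nonpos <;> linarith
  have hs : ∑ i, (k - hA.eigenvalues i) * (hA.eigenvalues i - θ) ≤ 0 :=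
    Finset.sum_nonpos fun i _ => hle i
  have e : ∑ i, (k - hA.eigenvalues i) * (hA.eigenvalues i - θ) =
      (k + θ) * ∑ i, hA.eigenvalues i - ∑ i, hA.eigenvalues i ^ 2 - Fintype.card V * (k * θ) := by
    rw [Finset.mul_sum, ← Finset.sum_sub_distrib]
    have : (Fintype.card V * (k * θ) : ℝ) = ∑ i : V, (k * θ) := by simp
    rw [this, ← Finset.sum_sub_distrib]
    exact Finset.sum_congr rfl fun i _ => by ring
  change 0 = ∑ i, hA.eigenvalues i at t1
  rw [e, ← t1, ← t2, t3] at hs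
  have hn : (0:ℝ) < Fintype.card V := by exact_mod_cast Fintype.card_pos
  have := mul_pos (mul_pos hn hk') (by linarith : 0 < -1 - θ)
  linarith

theorem aux_geo {V : Type*} [Fintype V] {G : SimpleGraph V} {D : ℕ} {p : ℕ → ℕ → ℕ → ℕ}
    (h : IsDRG G D p) : ∃ (x : V) (f : ℕ → V), (∀ i ≤ D, G.dist x (f i) = i) ∧
      ∀ i < D, G.Adj (f i) (f (i+1)) := by
  obtain ⟨x, y, hxy⟩ := h.exists_dist_eq
  obtain ⟨w, hw⟩ := h.connected.exists_walk_length_eq_dist x y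
  refine ⟨x, w.getVert, ?_, fun i hi => w.adj_getVert_succ (by omega)⟩
  intro i hi
  have h1 := SimpleGraph.dist_le (w.take i)
  have h2 := SimpleGraph.dist_le (w.drop i)
  rw [SimpleGraph.Walk.take_length] at h1
  rw [SimpleGraph.Walk.drop_length] at h2
  have h3 := h.connected.dist_triangle (u := x) (v := w.getVert i) (w := y)
  omega

theorem aux_cnt {V : Type*} [Fintype V] {G : SimpleGraph V} [DecidableRel G.Adj] {D : ℕ}
    {p : ℕ → ℕ → ℕ → ℕ} (h : IsDRG G D p) (hD : 1 ≤ D) (x z : V) (j : ℕ) (hj : j ≤ D) :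
    (Finset.univ.filter fun y => G.Adj z y ∧ G.dist x y = j).card = p (G.dist x z) 1 j := by
  rw [← h.inter (G.dist x z) 1 j (h.dist_le _ _) hD hj z x SimpleGraph.dist_comm]
  rw [← Set.ncard_coe_finset]
  congr 1
  ext y
  simp [SimpleGraph.dist_eq_one_iff_adj]

theorem aux_deg {V : Type*} [Fintype V] {G : SimpleGraph V} [DecidableRel G.Adj] {D : ℕ}
    {p : ℕ → ℕ → ℕ → ℕ} (h : IsDRG G D p) (hD : 1 ≤ D) (x : V) : G.degree x = p 0 1 1 := by
  have := aux_cnt h hD x x 1 hD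
  rw [SimpleGraph.dist_self] at this
  rw [← this, ← SimpleGraph.card_neighborFinset_eq_degree]
  congr 1
  ext y
  simp [SimpleGraph.dist_eq_one_iff_adj]

theorem aux_row {V : Type*} [Fintype V] {G : SimpleGraph V} [DecidableRel G.Adj] {D : ℕ}
    {p : ℕ → ℕ → ℕ → ℕ} (h : IsDRG G D p) (hD : 1 ≤ D) (i : ℕ) (hi : i ≤ D) :
    ∑ j ∈ Finset.range (D+1), p i 1 j = p 0 1 1 := by
  obtain ⟨x, f, hf, -⟩ := aux_geo h
  rw [← aux_deg h hD (f i), ← SimpleGraph.card_neighborFinset_eq_degree,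
    Finset.card_eq_sum_card_fiberwise (f := fun y => G.dist x y) (t := Finset.range (D+1))]
  · refine Finset.sum_congr rfl fun j hj => ?_
    have := aux_cnt h hD x (f i) j (by simpa [Nat.lt_succ_iff] using hj)
    rw [hf i hi] at this
    rw [← this]
    congr 1
    ext y
    simp
  · intro y _
    simpa [Nat.lt_succ_iff] using h.dist_le x y

theorem aux_zero {V : Type*} [Fintype V] {G : SimpleGraph V} [DecidableRel G.Adj] {D : ℕ}
    {p : ℕ → ℕ → ℕ → ℕ} (h : IsDRG G D p) (hD : 1 ≤ D) (i j : ℕ) (hi : i ≤ D) (hj : j ≤ D)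
    (h1 : j ≠ i) (h2 : j ≠ i + 1) (h3 : j + 1 ≠ i) : p i 1 j = 0 := by
  obtain ⟨x, f, hf, -⟩ := aux_geo h
  have := aux_cnt h hD x (f i) j hj
  rw [hf i hi] at this
  rw [← this, Finset.card_eq_zero, Finset.filter_eq_empty_iff]
  rintro y - ⟨hy, hd⟩
  have := hy.diff_dist_adj (u := x)
  have := hy.symm.diff_dist_adj (u := x)
  rw [hf i hi] at *
  omega

theorem aux_bpos {V : Type*} [Fintype V] {G : SimpleGraph V} [DecidableRel G.Adj] {D : ℕ}
    {p : ℕ → ℕ → ℕ → ℕ} (h : IsDRG G D p) (hD : 1 ≤ D) (i : ℕ) (hi : i < D) :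
    0 < p i 1 (i+1) := by
  obtain ⟨x, f, hf, hf2⟩ := aux_geo h
  have := aux_cnt h hD x (f i) (i+1) hi
  rw [hf i hi.le] at this
  rw [← this, Finset.card_pos]
  exact ⟨f (i+1), by simp [hf2 i hi, hf (i+1) hi]⟩

theorem aux_tri (D i : ℕ) (hi : i ≤ D) (g : ℕ → ℝ)
    (hg : ∀ j ≤ D, j ≠ i → j ≠ i + 1 → j + 1 ≠ i → g j = 0) :
    ∑ j ∈ Finset.range (D+1), g j =
      (if i = 0 then 0 else g (i-1)) + g i + (if i < D then g (i+1) else 0) := by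
  have e : ∀ j ∈ Finset.range (D+1), g j = (if i - 1 = j then (if i = 0 then 0 else g (i-1)) else 0)
      + (if i = j then g i else 0) + (if i + 1 = j then g (i+1) else 0) := by
    intro j hj
    have hj : j ≤ D := by simpa [Nat.lt_succ_iff] using hj
    by_cases h1 : j = i
    · subst h1
      rcases j with _ | j <;> simp
    · by_cases h2 : j = i + 1
      · subst h2
        have : ¬ (i - 1 = i + 1) := by omega
        simp [this]
      · by_cases h3 : j + 1 = i
        · subst h3
          have : ¬ (j + 1 + 1 = j) := by omega
          simp [this]
        · rw [hg j hj h1 h2 h3]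
          rw [if_neg (by omega : ¬ i = j), if_neg (by omega : ¬ i + 1 = j)]
          by_cases h0 : i = 0
          · simp [h0]
          · rw [if_neg (by omega : ¬ i - 1 = j)]; simp
  rw [Finset.sum_congr rfl e, Finset.sum_add_distrib, Finset.sum_add_distrib,
    Finset.sum_ite_eq, Finset.sum_ite_eq, Finset.sum_ite_eq]
  have m1 : i - 1 ∈ Finset.range (D+1) := by simp; omega
  have m2 : i ∈ Finset.range (D+1) := by simp; omega
  simp [m1, m2]

theorem aux_S {V : Type*} [Fintype V] {G : SimpleGraph V} [DecidableRel G.Adj] {D : ℕ}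
    {p : ℕ → ℕ → ℕ → ℕ} (h : IsDRG G D p) (hD : 1 ≤ D) (η : ℝ) (hη : IsAdjEigenval G η) :
    ∃ S : ℕ → ℝ, S 0 ≠ 0 ∧ S (D+1) = 0 ∧
      ∀ j ≤ D, η * S j = ∑ i ∈ Finset.range (D+1), (p i 1 j : ℝ) * S i := by
  obtain ⟨v, hv, hAv⟩ := hη
  obtain ⟨x, hx⟩ := Function.ne_iff.1 hv
  refine ⟨fun j => ∑ z, if G.dist x z = j then v z else 0, ?_, ?_, ?_⟩
  · have : ∀ z, G.dist x z = 0 ↔ x = z := fun z => h.connected.dist_eq_zero_iff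
    have e : (∑ z, if G.dist x z = 0 then v z else 0) = v x := by
      rw [Finset.sum_eq_single x]
      · simp
      · intro z _ hz
        exact if_neg fun h' => hz ((this z).1 h').symm
      · simp
    show (∑ z, if G.dist x z = 0 then v z else 0) ≠ 0
    rw [e]
    exact hx
  · refine Finset.sum_eq_zero fun z _ => if_neg ?_
    have := h.dist_le x z
    omega
  · intro j hj
    have e1 : ∀ z, η * v z = ∑ y, if G.Adj z y then v y else 0 := by
      intro z
      have := congrFun hAv z
      rw [SimpleGraph.adjMatrix_mulVec_apply] at this
      simp only [Pi.smul_apply, smul_eq_mul] at this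
      rw [← this, ← Finset.sum_filter]
      refine Finset.sum_congr ?_ fun _ _ => rfl
      ext; simp
    have e2 : ∀ y, (∑ z, if G.Adj y z ∧ G.dist x z = j then (1:ℝ) else 0) = p (G.dist x y) 1 j := by
      intro y
      rw [← aux_cnt h hD x y j hj, Finset.sum_boole]
    calc η * ∑ z, (if G.dist x z = j then v z else 0)
        = ∑ z, ∑ y, (if G.Adj y z ∧ G.dist x z = j then (1:ℝ) else 0) * v y := by
          rw [Finset.mul_sum]
          refine Finset.sum_congr rfl fun z _ => ?_
          by_cases hz : G.dist x z = j
          · simp only [hz, if_true, and_true, e1]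
            refine Finset.sum_congr rfl fun y _ => ?_
            have := G.adj_comm y z
            by_cases hyz : G.Adj z y
            · simp [hyz, hyz.symm]
            · simp [hyz, this]
          · simp [hz]
      _ = ∑ y, (p (G.dist x y) 1 j : ℝ) * v y := by
          rw [Finset.sum_comm]
          refine Finset.sum_congr rfl fun y _ => ?_
          rw [← Finset.sum_mul, e2]
      _ = ∑ y, ∑ i ∈ Finset.range (D+1), (p i 1 j : ℝ) * (if G.dist x y = i then v y else 0) := by
          refine Finset.sum_congr rfl fun y _ => ?_
          have : G.dist x y ∈ Finset.range (D+1) := by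
            simpa [Nat.lt_succ_iff] using h.dist_le x y
          simp only [mul_ite, mul_zero]
          rw [Finset.sum_ite_eq, if_pos this]
      _ = _ := by
          rw [Finset.sum_comm]
          refine Finset.sum_congr rfl fun i _ => ?_
          rw [Finset.mul_sum]

theorem aux_SD {V : Type*} [Fintype V] {G : SimpleGraph V} [DecidableRel G.Adj] {D : ℕ}
    {p : ℕ → ℕ → ℕ → ℕ} (h : IsDRG G D p) (hD : 1 ≤ D) (η : ℝ) (S : ℕ → ℝ) (h0 : S 0 ≠ 0)
    (hS : ∀ j ≤ D, η * S j = ∑ i ∈ Finset.range (D+1), (p i 1 j : ℝ) * S i) : S D ≠ 0 := by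
  intro hSD
  have : ∀ m ≤ D, S (D - m) = 0 ∧ (m ≠ 0 → S (D - m + 1) = 0) := by
    intro m
    induction m with
    | zero => intro _; simpa using hSD
    | succ m ih =>
      intro hm
      obtain ⟨i1, i2⟩ := ih (by omega)
      obtain ⟨t, ht⟩ : ∃ t, D - m = t + 1 := ⟨D - m - 1, by omega⟩
      have ht' : D - (m+1) = t := by omega
      rw [ht] at i1 i2
      rw [ht']
      refine ⟨?_, fun _ => i1⟩
      have e := hS (t+1) (by omega)
      rw [aux_tri D (t+1) (by omega)] at e
      · have z : (if t + 1 < D then (p (t+1+1) 1 (t+1) : ℝ) * S (t+1+1) else 0) = 0 := by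
          split_ifs with hlt
          · rw [i2 (by omega), mul_zero]
          · rfl
        rw [z, i1] at e
        simp only [Nat.add_sub_cancel] at e
        have bp := aux_bpos h hD t (by omega)
        have bp' : (p t 1 (t+1) : ℝ) ≠ 0 := by exact_mod_cast bp.ne'
        simpa [bp'] using e
      · intro j hj a1 a2 a3
        rw [aux_zero h hD j (t+1) hj (by omega) (by omega) (by omega) (by omega)]
        simp
  have := (this D le_rfl).1
  rw [Nat.sub_self] at this
  exact h0 this

theorem aux_u {V : Type*} [Fintype V] {G : SimpleGraph V} [DecidableRel G.Adj] {D : ℕ}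
    {p : ℕ → ℕ → ℕ → ℕ} (h : IsDRG G D p) (hD : 1 ≤ D) (θ : ℝ) (hθ : IsAdjEigenval G θ)
    (u : ℕ → ℝ)
    (hu : ∀ i < D, ∑ j ∈ Finset.range (D+1), (p i 1 j : ℝ) * u j = θ * u i) :
    ∀ i ≤ D, ∑ j ∈ Finset.range (D+1), (p i 1 j : ℝ) * u j = θ * u i := by
  obtain ⟨S, h0, -, hS⟩ := aux_S h hD θ hθ
  have hSD := aux_SD h hD θ S h0 hS
  intro i hi
  rcases hi.lt_or_eq with hi | rfl
  · exact hu i hi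
  have e : ∑ l ∈ Finset.range (i+1), S l * (∑ j ∈ Finset.range (i+1), (p l 1 j : ℝ) * u j)
      = ∑ l ∈ Finset.range (i+1), S l * (θ * u l) := by
    calc _ = ∑ j ∈ Finset.range (i+1), ∑ l ∈ Finset.range (i+1), S l * ((p l 1 j : ℝ) * u j) := by
          rw [Finset.sum_comm]
          exact Finset.sum_congr rfl fun _ _ => Finset.mul_sum _ _ _
      _ = _ := by
          refine Finset.sum_congr rfl fun j hj => ?_
          have := hS j (by simpa [Nat.lt_succ_iff] using hj)
          calc _ = (∑ l ∈ Finset.range (i+1), (p l 1 j : ℝ) * S l) * u j := by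
                rw [Finset.sum_mul]
                exact Finset.sum_congr rfl fun _ _ => by ring
            _ = _ := by rw [← this]; ring
  rw [Finset.sum_range_succ, Finset.sum_range_succ (fun l => S l * (θ * u l)),
    Finset.sum_congr rfl (fun l hl => by rw [hu l (Finset.mem_range.1 hl)])] at e
  exact mul_left_cancel₀ hSD (add_left_cancel e)

/-- Let `θ ≠ k` be an eigenvalue of classical `q`-type of a distance-regular graph of
diameter `D ≥ 2`, and let `θ₁` be the largest adjacency eigenvalue different from `k`.
Then `θ = θ₁` iff `q > 0`. -/
theorem stmt11 {V : Type*} [Fintype V] (G : SimpleGraph V) [DecidableRel G.Adj]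
    (D : ℕ) (p : ℕ → ℕ → ℕ → ℕ) (hdrg : IsDRG G D p) (hD : 2 ≤ D)
    (q : ℝ) (hq : q ≠ 0)
    (θ : ℝ) (hθ : IsAdjEigenval G θ) (hθk : θ ≠ (p 0 1 1 : ℝ))
    (u : ℕ → ℝ) (hu : IsStdSeq D p θ u) (hct : IsClassicalQType D q u)
    (θ₁ : ℝ) (hθ₁ : IsAdjEigenval G θ₁) (hθ₁k : θ₁ ≠ (p 0 1 1 : ℝ))
    (hθ₁max : ∀ η : ℝ, IsAdjEigenval G η → η ≠ (p 0 1 1 : ℝ) → η ≤ θ₁) :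
    θ = θ₁ ↔ 0 < q := by
  have hD1 : 1 ≤ D := by omega
  obtain ⟨hu0, hu1, hrec⟩ := hu
  obtain ⟨cc, hcc⟩ := hct
  set k : ℝ := (p 0 1 1 : ℝ) with hk
  have kpos : 0 < p 0 1 1 := aux_bpos hdrg hD1 0 (by omega)
  have kpos' : 0 < k := Nat.cast_pos.2 kpos
  have hne : Nonempty V := hdrg.connected.nonempty
  have d1 : 1 - u 1 ≠ 0 := by
    rw [hu1]
    intro h
    apply hθk
    have : θ / k = 1 := by linarith
    rw [div_eq_one_iff_eq kpos'.ne'] at this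
    exact this
  have hdiff : ∀ i < D, u i - u (i+1) = (1/q)^i * (1 - u 1) := by
    intro i
    induction i with
    | zero => intro _; simp [hu0]
    | succ i ih =>
      intro hi
      have h1 := hcc (i+1) (by omega) (by omega)
      have h2 := hcc (i+1+1) (by omega) (by omega)
      simp only [Nat.add_sub_cancel] at h1 h2
      have h3 := ih (by omega)
      rw [pow_succ]
      linear_combination h1 - h2 + (1/q) * h3
  have hrow : ∀ i ≤ D, ∑ j ∈ Finset.range (D+1), (p i 1 j : ℝ) = k := by
    intro i hi
    rw [hk, ← aux_row hdrg hD1 i hi]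
    push_cast; rfl
  set a : ℕ → ℝ := fun i => p i 1 i with ha
  set b : ℕ → ℝ := fun i => if i < D then (p i 1 (i+1) : ℝ) else 0 with hb
  set c : ℕ → ℝ := fun i => if i = 0 ∨ D < i then 0 else (p i 1 (i-1) : ℝ) with hc
  have hT : ∀ (w : ℕ → ℝ) (i : ℕ), i ≤ D → ∑ j ∈ Finset.range (D+1), (p i 1 j : ℝ) * w j =
      c i * w (i-1) + a i * w i + b i * w (i+1) := by
    intro w i hi
    rw [aux_tri D i hi]
    · have : ¬ D < i := by omega
      simp only [ha, hb, hc, this, or_false, ite_mul, zero_mul]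
    · intro j hj a1 a2 a3
      rw [aux_zero hdrg hD1 i j hi hj a1 a2 a3]; simp
  have hsum : ∀ i ≤ D, a i + b i + c i = k := by
    intro i hi
    have h1 := hT (fun _ => 1) i hi
    simp only [mul_one] at h1
    rw [hrow i hi] at h1
    linarith
  have b0 : b 0 = k := by simp only [hb]; rw [if_pos (by omega)]
  have c0 : c 0 = 0 := by simp [hc]
  have a0 : a 0 = 0 := by linarith [hsum 0 (by omega)]
  have hur : ∀ i ≤ D, c i * u (i-1) + a i * u i + b i * u (i+1) = θ * u i := by
    have := aux_u hdrg hD1 θ hθ u ?_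
    · intro i hi
      rw [← hT u i hi]; exact this i hi
    · intro i hi
      rw [hT u i hi.le]
      rcases Nat.eq_zero_or_pos i with rfl | hp
      · rw [c0, a0, b0, hu0, zero_add, hu1]; field_simp; ring
      · have := hrec i hp (by omega)
        rw [← this]
        have n1 : ¬ (i = 0 ∨ D < i) := by omega
        simp only [ha, hb, hc, if_pos hi, if_neg n1]
  have hreg := aux_deg hdrg hD1
  constructor
  · intro hθθ
    by_contra hq0
    have hqn : q < 0 := lt_of_le_of_ne (not_lt.1 hq0) hq
    refine aux_neg G (p 0 1 1) kpos hreg θ ?_ (fun η h1 h2 => hθθ ▸ hθ₁max η h1 h2)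
    have r1 := hur 1 hD1
    have s1 := hsum 1 hD1
    have e1 := hdiff 1 (by omega)
    have hb1 : 0 < b 1 := by
      simp only [hb]; rw [if_pos (by omega)]
      exact_mod_cast aux_bpos hdrg hD1 1 (by omega)
    have hc1 : c 1 = 1 := by
      have h0 := aux_cnt hdrg hD1 
      obtain ⟨x, f, hf, -⟩ := aux_geo hdrg
      have h1 := h0 x (f 1) 0 (by omega)
      rw [hf 1 hD1] at h1
      have n1 : ¬ ((1:ℕ) = 0 ∨ D < 1) := by omega
      simp only [hc, if_neg n1, Nat.sub_self]
      rw [← h1]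
      have : (Finset.univ.filter fun y => G.Adj (f 1) y ∧ G.dist x y = 0) = {x} := by
        ext y
        have had : G.Adj (f 1) x := by
          rw [G.adj_comm, ← SimpleGraph.dist_eq_one_iff_adj]; exact hf 1 hD1
        simp only [Finset.mem_filter, Finset.mem_univ, true_and, Finset.mem_singleton,
          hdrg.connected.dist_eq_zero_iff]
        constructor
        · rintro ⟨_, h⟩; exact h.symm
        · rintro rfl; exact ⟨had, rfl⟩
      rw [this]; simp
    have hθu : θ = k * u 1 := by rw [hu1]; field_simp
    simp only [Nat.sub_self, hu0, hc1, pow_one] at r1 s1 e1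
    have e2 : (1 - u 1) * (1 + θ) = (1 - u 1) * (b 1 * (1/q)) := by
      have : a 1 = k - 1 - b 1 := by linarith
      rw [this] at r1
      rw [hθu] at r1 ⊢
      linear_combination r1 + b 1 * e1
    have e3 := mul_left_cancel₀ d1 e2
    have : b 1 * (1/q) < 0 := mul_neg_of_pos_of_neg hb1 (one_div_neg.2 hqn)
    linarith
  · intro hqp
    refine le_antisymm (hθ₁max θ hθ hθk) ?_
    obtain ⟨S, h0, hS1, hS⟩ := aux_S hdrg hD1 θ₁ hθ₁
    have hb0 : ∀ i, 0 ≤ b i := by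
      intro i; simp only [hb]; split_ifs <;> positivity
    have hc0 : ∀ i, 0 ≤ c i := by
      intro i; simp only [hc]; split_ifs <;> positivity
    have hbD : b D = 0 := by simp [hb]
    have hTS : ∀ j ≤ D, θ₁ * S j = (if j = 0 then 0 else (p (j-1) 1 j : ℝ) * S (j-1)) + a j * S j
        + c (j+1) * S (j+1) := by
      intro j hj
      rw [hS j hj, aux_tri D j hj]
      · congr 1
        by_cases hlt : j < D
        · have n1 : ¬ (j + 1 = 0 ∨ D < j + 1) := by omega
          simp only [hc, if_pos hlt, if_neg n1, Nat.add_sub_cancel]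
        · have n1 : (j + 1 = 0 ∨ D < j + 1) := by omega
          simp only [hc, if_neg hlt, if_pos n1, zero_mul]
      · intro i hi a1 a2 a3
        rw [aux_zero hdrg hD1 i j hi hj (by omega) (by omega) (by omega)]; simp
    have hS0 : θ₁ * S 0 = a 0 * S 0 + c 1 * S 1 := by simpa using hTS 0 (by omega)
    have hSS : ∀ i < D, θ₁ * S (i+1) = b i * S i + a (i+1) * S (i+1) + c (i+2) * S (i+2) := by
      intro i hi
      rw [hTS (i+1) hi]
      simp only [hb, if_pos hi, Nat.add_sub_cancel]
      simp
    rcases lt_or_gt_of_ne d1 with hneg | hpos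
    · refine aux_perron D a b c S (fun i => - u i) k θ₁ θ hD1 hb0 hc0 c0 hbD hsum hS1 hS0 hSS
        ?_ ?_ hθ₁k h0
      · intro i hi
        linear_combination - hur i hi
      · intro i hi
        have := hdiff i hi
        have h2 : 0 < (1/q)^i * (-(1 - u 1)) := mul_pos (by positivity) (by linarith)
        linarith
    · refine aux_perron D a b c S u k θ₁ θ hD1 hb0 hc0 c0 hbD hsum hS1 hS0 hSS
        hur ?_ hθ₁k h0
      intro i hi
      rw [hdiff i hi]
      exact mul_pos (by positivity) hpos
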